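/- arXiv:2208.08324 — 3 statements merged into one kernel-verified Lean document; each statement's English description precedes it below -/
import Mathlib

section
/- Let μ be a nonzero measure on a measurable space X, let λ > 0, τ ∈ ℝ, and let u : (0,∞) × X → ℝ be measurable. Set C := ∫_X exp(−λ·û_τ(x)) dμ(x). If C < ∞, then C > 0, for every t > 0 one has ∫_X exp(−λ·u(t,x)) dμ(x) ≤ C·e^{−λτt}, and consequently liminf_{t→∞} −(1/(λt))·log ∫_X exp(−λ·u(t,·)) dμ ≥ τ. -/
open MeasureTheory Filter Set

/-- `exp(-λ·a)` for `a ∈ [-∞,∞)`, valued in `[0,∞]`, with the convention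
`exp(-λ·(-∞)) = +∞`. -/
noncomputable def expNegE (lam : ℝ) (a : EReal) : ENNReal :=
  if a = ⊥ then ⊤ else ENNReal.ofReal (Real.exp (-lam * a.toReal))

/-- The Legendre transform `û_τ(x) = inf_{t>0} (u(t,x) − τ·t)`, valued in `[−∞,∞)`. -/
noncomputable def legendreT {X : Type*} (u : ℝ → X → ℝ) (τ : ℝ) (x : X) : EReal :=
  ⨅ (t : ℝ) (_ : 0 < t), ((u t x - τ * t : ℝ) : EReal)

theorem aux_pt {X : Type*} (lam τ : ℝ) (hlam : 0 < lam) (u : ℝ → X → ℝ) (x : X)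
    (t : ℝ) (ht : 0 < t) :
    ENNReal.ofReal (Real.exp (-lam * u t x)) ≤
      expNegE lam (legendreT u τ x) * ENNReal.ofReal (Real.exp (-(lam * τ * t))) := by
  have hle : legendreT u τ x ≤ ((u t x - τ * t : ℝ) : EReal) := iInf₂_le t ht
  unfold expNegE
  split_ifs with h
  · rw [ENNReal.top_mul (by simpa using Real.exp_pos _)]
    exact le_top
  · have h2 := EReal.toReal_le_toReal hle h (EReal.coe_ne_top _)
    rw [EReal.toReal_coe] at h2
    rw [← ENNReal.ofReal_mul (Real.exp_pos _).le, ← Real.exp_add]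
    apply ENNReal.ofReal_le_ofReal
    apply Real.exp_le_exp.mpr
    nlinarith [mul_le_mul_of_nonneg_left h2 hlam.le]

/-- Let `μ` be a nonzero measure, `λ > 0`, `τ ∈ ℝ`, `u : (0,∞) × X → ℝ` measurable, and set
`C := ∫_X exp(−λ·û_τ) dμ`.  If `C < ∞` then `C > 0`, for every `t > 0` one has
`∫_X exp(−λ·u(t,·)) dμ ≤ C·e^{−λτt}`, and consequently
`liminf_{t→∞} −(1/(λt))·log ∫_X exp(−λ·u(t,·)) dμ ≥ τ`. -/
theorem stmt1 {X : Type*} [MeasurableSpace X] (μ : Measure X) (hμ : μ ≠ 0)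
    (lam τ : ℝ) (hlam : 0 < lam)
    (u : ℝ → X → ℝ) (hu : Measurable fun q : ℝ × X => u q.1 q.2)
    (hC : (∫⁻ x, expNegE lam (legendreT u τ x) ∂μ) < ⊤) :
    0 < (∫⁻ x, expNegE lam (legendreT u τ x) ∂μ) ∧
    (∀ t : ℝ, 0 < t →
      (∫⁻ x, ENNReal.ofReal (Real.exp (-lam * u t x)) ∂μ) ≤
        (∫⁻ x, expNegE lam (legendreT u τ x) ∂μ) *
          ENNReal.ofReal (Real.exp (-(lam * τ * t)))) ∧
    (τ : EReal) ≤
      liminf (fun t : ℝ =>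
          ((-(1 / (lam * t)) *
            Real.log ((∫⁻ x, ENNReal.ofReal (Real.exp (-lam * u t x)) ∂μ).toReal) : ℝ) : EReal))
        atTop := by
  have hpos : ∀ t : ℝ, 0 < ∫⁻ x, ENNReal.ofReal (Real.exp (-lam * u t x)) ∂μ := by
    intro t
    have hm : Measurable fun x => ENNReal.ofReal (Real.exp (-lam * u t x)) := by
      have : Measurable (u t) := hu.comp (measurable_const.prodMk measurable_id)
      fun_prop
    rw [lintegral_pos_iff_support hm]
    have : (Function.support fun x => ENNReal.ofReal (Real.exp (-lam * u t x))) = univ := by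
      ext x
      simpa using Real.exp_pos _
    rw [this]
    exact Measure.measure_univ_pos.mpr hμ
  have hb : ∀ t : ℝ, 0 < t →
      (∫⁻ x, ENNReal.ofReal (Real.exp (-lam * u t x)) ∂μ) ≤
        (∫⁻ x, expNegE lam (legendreT u τ x) ∂μ) *
          ENNReal.ofReal (Real.exp (-(lam * τ * t))) := by
    intro t ht
    rw [← lintegral_mul_const' _ _ ENNReal.ofReal_ne_top]
    exact lintegral_mono fun x => aux_pt lam τ hlam u x t ht
  have hC0 : 0 < (∫⁻ x, expNegE lam (legendreT u τ x) ∂μ) := by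
    rw [pos_iff_ne_zero]
    intro h0
    have := hb 1 one_pos
    rw [h0, zero_mul] at this
    exact absurd this (not_le.mpr (hpos 1))
  refine ⟨hC0, hb, ?_⟩
  generalize (∫⁻ x, expNegE lam (legendreT u τ x) ∂μ) = C at *
  have hCr : 0 < C.toReal := ENNReal.toReal_pos hC0.ne' hC.ne
  have hlim : Tendsto (fun t : ℝ => ((τ - Real.log C.toReal / (lam * t) : ℝ) : EReal)) atTop
      (nhds (τ : EReal)) := by
    refine (continuous_coe_real_ereal.tendsto τ).comp ?_
    have h1 : Tendsto (fun t : ℝ => Real.log C.toReal / (lam * t)) atTop (nhds 0) :=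
      tendsto_const_nhds.div_atTop (tendsto_id.const_mul_atTop hlam)
    simpa using tendsto_const_nhds.sub h1
  rw [← hlim.liminf_eq]
  refine liminf_le_liminf ?_
  filter_upwards [eventually_gt_atTop (0 : ℝ)] with t ht
  rw [EReal.coe_le_coe_iff]
  have h1 := hb t ht
  have h2 := ENNReal.toReal_mono (ENNReal.mul_ne_top hC.ne ENNReal.ofReal_ne_top) h1
  have hI : 0 < (∫⁻ x, ENNReal.ofReal (Real.exp (-lam * u t x)) ∂μ).toReal :=
    ENNReal.toReal_pos (hpos t).ne'
      (ne_top_of_le_ne_top (ENNReal.mul_ne_top hC.ne ENNReal.ofReal_ne_top) h1)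
  have h3 := Real.log_le_log hI h2
  rw [ENNReal.toReal_mul, ENNReal.toReal_ofReal (Real.exp_pos _).le,
    Real.log_mul hCr.ne' (Real.exp_pos _).ne', Real.log_exp] at h3
  have hlt : 0 < lam * t := mul_pos hlam ht
  have h4 := mul_le_mul_of_nonneg_left h3 (one_div_pos.mpr hlt).le
  have h5 : 1 / (lam * t) * (Real.log C.toReal + -(lam * τ * t)) =
      Real.log C.toReal / (lam * t) - τ := by
    field_simp
    try ring
  rw [h5] at h4
  linarith
end

section
/- Let μ be a measure on a measurable space X, let λ > 0 and p ≤ 0 be real numbers, and let u : (0,∞) × X → ℝ be measurable such that for every x ∈ X the function t ↦ u(t,x) is nonincreasing. Then ∫_X exp(−λ·û_p(x)) dμ(x) ≤ e^{−λp} · ∫_{0}^{∞} e^{λpt} (∫_X exp(−λ·u(t,x)) dμ(x)) dt, all integrals being taken in [0,∞]. In particular, if the right-hand double integral is finite, then û_p(x) > −∞ for μ-almost every x and ∫_X exp(−λ·û_p) dμ < ∞. -/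
open MeasureTheory Filter Set

theorem ptwise_aux {X : Type*} (lam p : ℝ) (hlam : 0 < lam) (hp : p ≤ 0)
    (u : ℝ → X → ℝ) (x : X) (hmono : AntitoneOn (fun t => u t x) (Set.Ioi (0 : ℝ))) :
    expNegE lam (legendreT u p x) ≤ ENNReal.ofReal (Real.exp (-(lam * p))) *
        ∫⁻ t in Set.Ioi (0 : ℝ), ENNReal.ofReal (Real.exp (lam * p * t)) *
            ENNReal.ofReal (Real.exp (-lam * u t x)) := by
  set J := ENNReal.ofReal (Real.exp (-(lam * p))) *
        ∫⁻ t in Set.Ioi (0 : ℝ), ENNReal.ofReal (Real.exp (lam * p * t)) *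
            ENNReal.ofReal (Real.exp (-lam * u t x)) with hJ
  have key : ∀ t : ℝ, 0 < t → ENNReal.ofReal (Real.exp (-lam * (u t x - p * t))) ≤ J := by
    intro t ht
    have h1 : ENNReal.ofReal (Real.exp (lam * p * (t + 1) + -lam * u t x)) ≤
        ∫⁻ t in Set.Ioi (0 : ℝ), ENNReal.ofReal (Real.exp (lam * p * t)) *
            ENNReal.ofReal (Real.exp (-lam * u t x)) := by
      calc _ = ∫⁻ s in Set.Ioc t (t+1),
            ENNReal.ofReal (Real.exp (lam * p * (t + 1) + -lam * u t x)) := by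
            simp
        _ ≤ ∫⁻ s in Set.Ioc t (t+1), ENNReal.ofReal (Real.exp (lam * p * s)) *
            ENNReal.ofReal (Real.exp (-lam * u s x)) := by
            refine setLIntegral_mono' measurableSet_Ioc ?_
            intro s hs
            rw [← ENNReal.ofReal_mul (Real.exp_pos _).le, ← Real.exp_add]
            apply ENNReal.ofReal_le_ofReal
            apply Real.exp_le_exp.2
            have h2 : u s x ≤ u t x := hmono ht (lt_trans ht hs.1) hs.1.le
            have h3 : lam * p ≤ 0 := mul_nonpos_of_nonneg_of_nonpos hlam.le hp
            have h4 := mul_le_mul_of_nonpos_left hs.2 h3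
            have h5 := mul_le_mul_of_nonneg_left h2 hlam.le
            linarith
        _ ≤ _ := by
            apply lintegral_mono_set
            intro s hs
            exact lt_trans ht hs.1
    calc _ = ENNReal.ofReal (Real.exp (-(lam * p))) *
          ENNReal.ofReal (Real.exp (lam * p * (t + 1) + -lam * u t x)) := by
          rw [← ENNReal.ofReal_mul (Real.exp_pos _).le, ← Real.exp_add]
          congr 2; ring
      _ ≤ J := by rw [hJ]; gcongr
  by_cases hJt : J = ⊤
  · rw [hJt]; exact le_top
  have hJ0 : 0 < J.toReal := by
    apply ENNReal.toReal_pos _ hJt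
    have := key 1 one_pos
    intro h0
    rw [h0] at this
    simp at this
    exact absurd this (not_le.2 (Real.exp_pos _))
  have hlow : ((-(Real.log J.toReal) / lam : ℝ) : EReal) ≤ legendreT u p x := by
    unfold legendreT
    refine le_iInf fun t => le_iInf fun ht => ?_
    rw [EReal.coe_le_coe_iff, div_le_iff₀ hlam]
    have h1 := key t ht
    rw [ENNReal.ofReal_le_iff_le_toReal hJt] at h1
    have h2 := (Real.le_log_iff_exp_le hJ0).2 h1
    linarith
  have hup : legendreT u p x ≤ ((u 1 x - p * 1 : ℝ) : EReal) :=
    iInf_le_of_le 1 (iInf_le _ one_pos)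
  have hbot : legendreT u p x ≠ ⊥ := by
    intro h; rw [h] at hlow; simp at hlow
  have htop : legendreT u p x ≠ ⊤ := by
    intro h; rw [h] at hup; simp at hup
    exact absurd hup (by exact_mod_cast EReal.coe_ne_top (u 1 x - p))
  unfold expNegE
  rw [if_neg hbot, ENNReal.ofReal_le_iff_le_toReal hJt, ← Real.le_log_iff_exp_le hJ0]
  rw [← EReal.coe_toReal htop hbot, EReal.coe_le_coe_iff, div_le_iff₀ hlam] at hlow
  linarith

theorem sfin_aux {X : Type*} [MeasurableSpace X] (μ : Measure X) (f : X → ENNReal)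
    (hf : Measurable f) (h0 : ∀ x, f x ≠ 0) (ht : ∀ x, f x ≠ ⊤) (hi : ∫⁻ x, f x ∂μ ≠ ⊤) :
    SFinite μ := by
  have : IsFiniteMeasure (μ.withDensity f) := isFiniteMeasure_withDensity hi
  rw [← withDensity_inv_same (μ := μ) hf (ae_of_all _ h0) (ae_of_all _ ht)]
  infer_instance

/-- Let `μ` be a measure on `X`, `λ > 0`, `p ≤ 0`, and let `u : (0,∞) × X → ℝ` be measurable
with `t ↦ u(t,x)` nonincreasing for every `x`.  Then
`∫_X exp(−λ·û_p) dμ ≤ e^{−λp} · ∫_0^∞ e^{λpt} (∫_X exp(−λ·u(t,·)) dμ) dt`,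
all integrals taken in `[0,∞]`.  In particular, if the right-hand double integral is finite
then `û_p > −∞` μ-a.e. and `∫_X exp(−λ·û_p) dμ < ∞`. -/
theorem stmt2 {X : Type*} [MeasurableSpace X] (μ : Measure X)
    (lam p : ℝ) (hlam : 0 < lam) (hp : p ≤ 0)
    (u : ℝ → X → ℝ) (hu : Measurable fun q : ℝ × X => u q.1 q.2)
    (hmono : ∀ x, AntitoneOn (fun t => u t x) (Set.Ioi (0 : ℝ))) :
    (∫⁻ x, expNegE lam (legendreT u p x) ∂μ) ≤
      ENNReal.ofReal (Real.exp (-(lam * p))) *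
        ∫⁻ t in Set.Ioi (0 : ℝ),
          ENNReal.ofReal (Real.exp (lam * p * t)) *
            ∫⁻ x, ENNReal.ofReal (Real.exp (-lam * u t x)) ∂μ ∧
    ((∫⁻ t in Set.Ioi (0 : ℝ),
        ENNReal.ofReal (Real.exp (lam * p * t)) *
          ∫⁻ x, ENNReal.ofReal (Real.exp (-lam * u t x)) ∂μ) < ⊤ →
      (∀ᵐ x ∂μ, legendreT u p x ≠ ⊥) ∧
        (∫⁻ x, expNegE lam (legendreT u p x) ∂μ) < ⊤) := by
  set R := ∫⁻ t in Set.Ioi (0 : ℝ), ENNReal.ofReal (Real.exp (lam * p * t)) *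
            ∫⁻ x, ENNReal.ofReal (Real.exp (-lam * u t x)) ∂μ with hR
  have hc : ENNReal.ofReal (Real.exp (-(lam * p))) ≠ 0 := by
    simpa using Real.exp_pos _
  by_cases hRt : R = ⊤
  · rw [hRt, ENNReal.mul_top hc]
    exact ⟨le_top, fun h => absurd h (lt_irrefl _)⟩
  have hut : ∀ t, Measurable fun x => ENNReal.ofReal (Real.exp (-lam * u t x)) := by
    intro t
    have : Measurable (fun x => u t x) := hu.comp (measurable_prodMk_left (x := t))
    fun_prop
  have hex : ∃ t : ℝ, 0 < t ∧ ∫⁻ x, ENNReal.ofReal (Real.exp (-lam * u t x)) ∂μ ≠ ⊤ := by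
    by_contra! hcon
    apply hRt
    rw [hR, setLIntegral_congr_fun (g := fun _ => ⊤) measurableSet_Ioi]
    · simp
    · intro t ht
      simp only []
      rw [hcon t ht, ENNReal.mul_top]
      simpa using Real.exp_pos _
  obtain ⟨t, -, htf⟩ := hex
  have : SFinite μ := sfin_aux μ _ (hut t) (fun x => by simpa using Real.exp_pos _)
    (fun x => ENNReal.ofReal_ne_top) htf
  have hF : Measurable fun q : X × ℝ => ENNReal.ofReal (Real.exp (lam * p * q.2)) *
            ENNReal.ofReal (Real.exp (-lam * u q.2 q.1)) := by
    have : Measurable (fun q : X × ℝ => u q.2 q.1) := hu.comp measurable_swap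
    fun_prop
  set G : X → ENNReal := fun x => ∫⁻ t in Set.Ioi (0 : ℝ),
    ENNReal.ofReal (Real.exp (lam * p * t)) * ENNReal.ofReal (Real.exp (-lam * u t x)) with hG
  have hGm : Measurable G := hF.lintegral_prod_right'
  have hGR : ∫⁻ x, G x ∂μ = R := by
    rw [hG, lintegral_lintegral_swap hF.aemeasurable]
    simp_rw [hR, lintegral_const_mul _ (hut _)]
  have hpt := fun x => ptwise_aux lam p hlam hp u x (hmono x)
  have hle : (∫⁻ x, expNegE lam (legendreT u p x) ∂μ) ≤
      ENNReal.ofReal (Real.exp (-(lam * p))) * R := by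
    rw [← hGR, ← lintegral_const_mul _ hGm]
    exact lintegral_mono hpt
  refine ⟨hle, fun hlt => ⟨?_, hle.trans_lt (ENNReal.mul_lt_top ENNReal.ofReal_lt_top hlt)⟩⟩
  filter_upwards [ae_lt_top hGm (by rw [hGR]; exact hRt)] with x hx hb
  have h1 := (hpt x).trans_lt (ENNReal.mul_lt_top ENNReal.ofReal_lt_top hx)
  rw [hb] at h1
  simp [expNegE] at h1
end

section
/- Let μ be a nonzero finite measure on a measurable space X, let λ > 0, and let u : (0,∞) × X → ℝ be measurable such that for every x ∈ X the function t ↦ u(t,x) is nonincreasing and satisfies u(t,x) ≤ 0, and such that ∫_X exp(−λ·u(t,·)) dμ < ∞ for every t > 0. Suppose the set T := {τ ∈ ℝ : ∫_X exp(−λ·û_τ) dμ < ∞} is nonempty. Then T ⊆ (−∞, 0] and liminf_{t→∞} −(1/(λt))·log ∫_X exp(−λ·u(t,·)) dμ = sup T. -/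
open MeasureTheory Filter Set

lemma aux_le_expNegE {X : Type*} (lam : ℝ) (hlam : 0 < lam) (u : ℝ → X → ℝ) (τ : ℝ) (x : X)
    (t : ℝ) (ht : 0 < t) :
    ENNReal.ofReal (Real.exp (-lam * (u t x - τ * t))) ≤ expNegE lam (legendreT u τ x) := by
  have h1 : legendreT u τ x ≤ ((u t x - τ * t : ℝ) : EReal) := iInf₂_le t ht
  unfold expNegE
  split_ifs with h
  · exact le_top
  · have h2 := EReal.toReal_le_toReal h1 h (EReal.coe_ne_top _)
    rw [EReal.toReal_coe] at h2
    apply ENNReal.ofReal_le_ofReal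
    apply Real.exp_le_exp.2
    nlinarith

lemma aux_expNegE_le {X : Type*} (lam : ℝ) (hlam : 0 < lam) (u : ℝ → X → ℝ) (τ : ℝ) (x : X)
    (S : ENNReal)
    (hS : ∀ t : ℝ, 0 < t → ENNReal.ofReal (Real.exp (-lam * (u t x - τ * t))) ≤ S) :
    expNegE lam (legendreT u τ x) ≤ S := by
  by_cases hT : S = ⊤
  · simp [hT]
  have hs : ∀ t : ℝ, 0 < t → Real.exp (-lam * (u t x - τ * t)) ≤ S.toReal := by
    intro t ht
    exact (ENNReal.ofReal_le_iff_le_toReal hT).1 (hS t ht)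
  have hpos : 0 < S.toReal := (Real.exp_pos _).trans_le (hs 1 one_pos)
  have hm : ((-Real.log S.toReal / lam : ℝ) : EReal) ≤ legendreT u τ x := by
    refine le_iInf₂ fun t ht => ?_
    have h := (Real.le_log_iff_exp_le hpos).2 (hs t ht)
    rw [EReal.coe_le_coe_iff, div_le_iff₀ hlam]
    nlinarith
  have hbot : legendreT u τ x ≠ ⊥ := by
    intro h
    rw [h] at hm
    exact EReal.coe_ne_bot _ (le_bot_iff.1 hm)
  have htop : legendreT u τ x ≠ ⊤ := by
    intro h
    have h1 : legendreT u τ x ≤ ((u 1 x - τ * 1 : ℝ) : EReal) := iInf₂_le (1 : ℝ) one_pos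
    rw [h] at h1
    exact EReal.coe_ne_top _ (top_le_iff.1 h1)
  have h2 := EReal.toReal_le_toReal hm (EReal.coe_ne_bot _) htop
  rw [EReal.toReal_coe, div_le_iff₀ hlam] at h2
  unfold expNegE
  rw [if_neg hbot, ENNReal.ofReal_le_iff_le_toReal hT, ← Real.le_log_iff_exp_le hpos]
  nlinarith

lemma aux_neg {X : Type*} [MeasurableSpace X] (μ : Measure X) (hμ : μ ≠ 0)
    (lam : ℝ) (hlam : 0 < lam) (u : ℝ → X → ℝ)
    (hneg : ∀ x, ∀ t : ℝ, 0 < t → u t x ≤ 0) (τ : ℝ)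
    (h : (∫⁻ x, expNegE lam (legendreT u τ x) ∂μ) < ⊤) : τ ≤ 0 := by
  by_contra! hτ
  have : ∀ x, expNegE lam (legendreT u τ x) = ⊤ := by
    intro x
    apply ENNReal.eq_top_of_forall_nnreal_le
    intro r
    have ht : (0:ℝ) < (r + 1) / (lam * τ) := by positivity
    refine le_trans ?_ (aux_le_expNegE lam hlam u τ x _ ht)
    have h1 := hneg x _ ht
    rw [← ENNReal.ofReal_coe_nnreal]
    apply ENNReal.ofReal_le_ofReal
    have h2 : lam * (τ * ((r + 1) / (lam * τ))) = r + 1 := by field_simp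
    have h3 := Real.add_one_le_exp (-lam * (u ((r + 1) / (lam * τ)) x - τ * ((r + 1) / (lam * τ))))
    nlinarith
  simp only [this, lintegral_const] at h
  rw [ENNReal.top_mul (by simpa using hμ)] at h
  exact lt_irrefl _ h

lemma aux_mem {X : Type*} [MeasurableSpace X] (μ : Measure X)
    (lam : ℝ) (hlam : 0 < lam)
    (u : ℝ → X → ℝ) (hu : Measurable fun q : ℝ × X => u q.1 q.2)
    (hmono : ∀ x, AntitoneOn (fun t => u t x) (Set.Ioi (0 : ℝ)))
    (hfin : ∀ t : ℝ, 0 < t →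
      (∫⁻ x, ENNReal.ofReal (Real.exp (-lam * u t x)) ∂μ) < ⊤)
    (b τ : ℝ) (hb : τ < b) (hτ : τ ≤ 0)
    (hev : ∀ᶠ t : ℝ in atTop, (∫⁻ x, ENNReal.ofReal (Real.exp (-lam * u t x)) ∂μ).toReal
      ≤ Real.exp (-lam * b * t)) :
    (∫⁻ x, expNegE lam (legendreT u τ x) ∂μ) < ⊤ := by
  have hmeas : ∀ t, Measurable fun x => ENNReal.ofReal (Real.exp (-lam * u t x)) := by
    intro t
    have : Measurable (u t) := hu.comp measurable_prodMk_left
    fun_prop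
  have hle : ∀ x, expNegE lam (legendreT u τ x) ≤
      ∑' n : ℕ, ENNReal.ofReal (Real.exp (-lam * u (n + 1) x)) *
        ENNReal.ofReal (Real.exp (lam * τ * n)) := by
    intro x
    apply aux_expNegE_le lam hlam
    intro t ht
    refine le_trans ?_ (ENNReal.le_tsum ⌊t⌋₊)
    rw [← ENNReal.ofReal_mul (Real.exp_nonneg _), ← Real.exp_add]
    apply ENNReal.ofReal_le_ofReal
    apply Real.exp_le_exp.2
    have h1 := Nat.floor_le ht.le
    have h2 := (Nat.lt_floor_add_one t).le
    have h3 : u (⌊t⌋₊ + 1) x ≤ u t x :=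
      hmono x (Set.mem_Ioi.2 ht) (Set.mem_Ioi.2 (ht.trans_le h2)) h2
    have h4 : τ * t ≤ τ * ⌊t⌋₊ := mul_le_mul_of_nonpos_left h1 hτ
    nlinarith
  refine (lintegral_mono hle).trans_lt ?_
  rw [lintegral_tsum (fun n => ((hmeas _).mul_const _).aemeasurable)]
  set I : ℝ → ENNReal := fun t => ∫⁻ x, ENNReal.ofReal (Real.exp (-lam * u t x)) ∂μ with hI
  have hterm : ∀ n : ℕ, (∫⁻ x, ENNReal.ofReal (Real.exp (-lam * u (n + 1) x)) *
        ENNReal.ofReal (Real.exp (lam * τ * n)) ∂μ) =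
        ENNReal.ofReal ((I (n+1)).toReal * Real.exp (lam * τ * n)) := by
    intro n
    rw [lintegral_mul_const _ (hmeas _), ENNReal.ofReal_mul ENNReal.toReal_nonneg,
      ENNReal.ofReal_toReal (hfin _ (by positivity)).ne]
  simp only [hterm]
  have hsum : Summable fun n : ℕ => (I (n+1)).toReal * Real.exp (lam * τ * n) := by
    have hg : Summable fun n : ℕ => Real.exp (-lam * b) * (Real.exp (lam * (τ - b))) ^ n := by
      apply Summable.mul_left
      apply summable_geometric_of_lt_one (Real.exp_nonneg _)
      rw [Real.exp_lt_one_iff]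
      nlinarith
    refine Summable.of_norm_bounded_eventually_nat hg ?_
    have ht : Tendsto (fun n : ℕ => (n : ℝ) + 1) atTop atTop :=
      tendsto_atTop_add_const_right _ _ tendsto_natCast_atTop_atTop
    filter_upwards [ht.eventually hev] with n hn
    rw [Real.norm_of_nonneg (by positivity)]
    refine (mul_le_mul_of_nonneg_right hn (Real.exp_nonneg _)).trans (le_of_eq ?_)
    rw [← Real.exp_nat_mul, ← Real.exp_add, ← Real.exp_add]
    congr 1
    ring
  exact lt_top_iff_ne_top.2 hsum.tsum_ofReal_ne_top

/-- Let `μ` be a nonzero finite measure, `λ > 0`, and `u : (0,∞) × X → ℝ` measurable with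
`t ↦ u(t,x)` nonincreasing and `≤ 0` for every `x`, and `∫_X exp(−λ·u(t,·)) dμ < ∞` for all
`t > 0`.  If `T := {τ : ∫_X exp(−λ·û_τ) dμ < ∞}` is nonempty, then `T ⊆ (−∞,0]` and
`liminf_{t→∞} −(1/(λt))·log ∫_X exp(−λ·u(t,·)) dμ = sup T`. -/
theorem stmt3 {X : Type*} [MeasurableSpace X] (μ : Measure X) (hμ : μ ≠ 0)
    [IsFiniteMeasure μ] (lam : ℝ) (hlam : 0 < lam)
    (u : ℝ → X → ℝ) (hu : Measurable fun q : ℝ × X => u q.1 q.2)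
    (hmono : ∀ x, AntitoneOn (fun t => u t x) (Set.Ioi (0 : ℝ)))
    (hneg : ∀ x, ∀ t : ℝ, 0 < t → u t x ≤ 0)
    (hfin : ∀ t : ℝ, 0 < t →
      (∫⁻ x, ENNReal.ofReal (Real.exp (-lam * u t x)) ∂μ) < ⊤)
    (hT : {τ : ℝ | (∫⁻ x, expNegE lam (legendreT u τ x) ∂μ) < ⊤}.Nonempty) :
    {τ : ℝ | (∫⁻ x, expNegE lam (legendreT u τ x) ∂μ) < ⊤} ⊆ Set.Iic (0 : ℝ) ∧
    liminf (fun t : ℝ =>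
        ((-(1 / (lam * t)) *
          Real.log ((∫⁻ x, ENNReal.ofReal (Real.exp (-lam * u t x)) ∂μ).toReal) : ℝ) : EReal))
      atTop =
      ((sSup {τ : ℝ | (∫⁻ x, expNegE lam (legendreT u τ x) ∂μ) < ⊤} : ℝ) : EReal) := by
  have hsub : {τ : ℝ | (∫⁻ x, expNegE lam (legendreT u τ x) ∂μ) < ⊤} ⊆ Set.Iic (0 : ℝ) :=
    fun τ h => aux_neg μ hμ lam hlam u hneg τ h
  refine ⟨hsub, ?_⟩
  set T := {τ : ℝ | (∫⁻ x, expNegE lam (legendreT u τ x) ∂μ) < ⊤} with hTdef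
  have hbdd : BddAbove T := ⟨0, hsub⟩
  set I : ℝ → ENNReal := fun t => ∫⁻ x, ENNReal.ofReal (Real.exp (-lam * u t x)) ∂μ with hI
  have hμ0 : 0 < (μ univ).toReal :=
    ENNReal.toReal_pos (by simpa using hμ) (measure_ne_top _ _)
  have hIge : ∀ t, 0 < t → (μ univ).toReal ≤ (I t).toReal := by
    intro t ht
    apply ENNReal.toReal_mono (hfin t ht).ne
    rw [← lintegral_one]
    apply lintegral_mono
    intro x
    simp only
    rw [← ENNReal.ofReal_one]
    apply ENNReal.ofReal_le_ofReal
    apply Real.one_le_exp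
    have := hneg x t ht
    nlinarith
  apply le_antisymm
  · by_contra! hlt
    obtain ⟨b, hb1, hb2⟩ := EReal.lt_iff_exists_real_btwn.1 hlt
    have hb1' : sSup T < b := EReal.coe_lt_coe_iff.1 hb1
    have hev := eventually_lt_of_lt_liminf hb2
    have hev' : ∀ᶠ t : ℝ in atTop, (I t).toReal ≤ Real.exp (-lam * b * t) := by
      filter_upwards [hev, eventually_gt_atTop 0] with t ht ht0
      have h1 := EReal.coe_lt_coe_iff.1 ht
      have hp : 0 < (I t).toReal := hμ0.trans_le (hIge t ht0)
      rw [← Real.log_le_iff_le_exp hp]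
      have hlt : 0 < lam * t := by positivity
      have h2 := mul_lt_mul_of_pos_right h1 hlt
      have h3 : -(1 / (lam * t)) * Real.log (I t).toReal * (lam * t) = - Real.log (I t).toReal := by
        field_simp
      have h3' : b * (lam * t) < - Real.log (I t).toReal := h3 ▸ h2
      nlinarith
    have hb0 : b ≤ 0 := by
      by_contra! hb
      have htend : Tendsto (fun t : ℝ => Real.exp (-lam * b * t)) atTop (nhds 0) := by
        apply Real.tendsto_exp_atBot.comp
        exact tendsto_id.const_mul_atTop_of_neg (by nlinarith)
      obtain ⟨t, h1, h2, h3⟩ := (hev'.and ((htend.eventually (gt_mem_nhds hμ0)).and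
        (eventually_gt_atTop 0))).exists
      have := hIge t h3
      linarith
    obtain ⟨τ, h1, h2⟩ := exists_between hb1'
    have : τ ∈ T := aux_mem μ lam hlam u hu hmono hfin b τ h2 (by linarith) hev'
    exact absurd (le_csSup hbdd this) (not_le.2 h1)
  · by_contra! hlt
    obtain ⟨b, hb1, hb2⟩ := EReal.lt_iff_exists_real_btwn.1 hlt
    obtain ⟨τ, hτ, hbτ⟩ := exists_lt_of_lt_csSup hT (EReal.coe_lt_coe_iff.1 hb2)
    refine absurd hb1 (not_lt.2 ?_)
    apply le_liminf_of_le
    · isBoundedDefault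
    set C := ∫⁻ x, expNegE lam (legendreT u τ x) ∂μ with hC
    have hCtop : C < ⊤ := hτ
    have hIC : ∀ t, 0 < t → (I t).toReal ≤ C.toReal * Real.exp (-lam * τ * t) := by
      intro t ht
      have : I t ≤ C * ENNReal.ofReal (Real.exp (-lam * τ * t)) := by
        rw [hC, ← lintegral_mul_const' _ _ ENNReal.ofReal_ne_top]
        apply lintegral_mono
        intro x
        refine le_trans (le_of_eq ?_) (mul_le_mul_left (aux_le_expNegE lam hlam u τ x t ht) _)
        rw [← ENNReal.ofReal_mul (Real.exp_nonneg _), ← Real.exp_add]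
        congr 2
        ring
      have h2 := ENNReal.toReal_mono (ENNReal.mul_ne_top hCtop.ne ENNReal.ofReal_ne_top) this
      rwa [ENNReal.toReal_mul, ENNReal.toReal_ofReal (Real.exp_nonneg _)] at h2
    have hCpos : 0 < C.toReal := by
      have h1 := hIC 1 one_pos
      have h2 := hIge 1 one_pos
      by_contra! h
      nlinarith [Real.exp_pos (-lam * τ * 1)]
    have hlin : Tendsto (fun t : ℝ => (lam * (τ - b)) * t) atTop atTop :=
      tendsto_id.const_mul_atTop (mul_pos hlam (by linarith))
    filter_upwards [hlin.eventually_ge_atTop (Real.log C.toReal), eventually_gt_atTop 0]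
      with t ht ht0
    rw [EReal.coe_le_coe_iff]
    have hp : 0 < (I t).toReal := hμ0.trans_le (hIge t ht0)
    have h1 := Real.log_le_log hp (hIC t ht0)
    rw [Real.log_mul hCpos.ne' (Real.exp_pos _).ne', Real.log_exp] at h1
    have hlt : 0 < lam * t := by positivity
    have h3 : -(1 / (lam * t)) * Real.log (I t).toReal = (- Real.log (I t).toReal) / (lam * t) := by
      ring
    change b ≤ -(1 / (lam * t)) * Real.log (I t).toReal
    rw [h3, le_div_iff₀ hlt]
    nlinarith
end
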